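/- For every Lagrangian subspace A of (⋀³V, σ) there exists a nonzero vector v ∈ V such that dim(A ∩ F_v) ≥ 2. (Equivalently: the locus W_A = {[v] ∈ ℙ(V) : dim(A ∩ F_v) ≥ 2} is never empty.) -/

import Mathlib

open ExteriorAlgebra

/-- The subspace `F_v = v ∧ ⋀²V = {v∧β : β ∈ ⋀²V}` of `⋀³V`, as a submodule of the
exterior algebra. -/
noncomputable def Fsub {V : Type*} [AddCommGroup V] [Module ℂ V] (v : V) :
    Submodule ℂ (ExteriorAlgebra ℂ V) :=
  (⋀[ℂ]^2 V).map (LinearMap.mulLeft ℂ (ExteriorAlgebra.ι ℂ v))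

open MvPolynomial in
theorem elim_aux {n d : ℕ} {ι : Type*} (F : ι → MvPolynomial (Fin n) (Polynomial ℂ))
    (hF : ∀ i, (F i).IsHomogeneous d)
    (h0 : ∀ x : Fin n → ℂ, (∀ i, eval x (map (Polynomial.evalRingHom 0) (F i)) = 0) → x = 0) :
    ∃ h : Polynomial ℂ, h ≠ 0 ∧ ∀ t : ℂ, h.eval t ≠ 0 → ∀ x : Fin n → ℂ,
      (∀ i, eval x (map (Polynomial.evalRingHom t) (F i)) = 0) → x = 0 := by
  classical
  let _ := MvPolynomial.gradedAlgebra (σ := Fin n) (R := Polynomial ℂ)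
  let φ : MvPolynomial (Fin n) (Polynomial ℂ) →+* MvPolynomial (Fin n) ℂ :=
    map (Polynomial.evalRingHom 0)
  let J : Ideal (MvPolynomial (Fin n) (Polynomial ℂ)) := Ideal.span (Set.range F)
  have hJ : J.IsHomogeneous (homogeneousSubmodule (Fin n) (Polynomial ℂ)) := by
    apply Ideal.homogeneous_span
    rintro _ ⟨i, rfl⟩
    exact ⟨d, hF i⟩
  let J0 : Ideal (MvPolynomial (Fin n) ℂ) := J.map φ
  have hX : ∀ j, (X j : MvPolynomial (Fin n) ℂ) ∈ J0.radical := by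
    intro j
    rw [← vanishingIdeal_zeroLocus_eq_radical (K := ℂ)]
    intro x hx
    have : x = 0 := by
      apply h0
      intro i
      have := hx (φ (F i)) (Ideal.mem_map_of_mem _ (Ideal.subset_span ⟨i, rfl⟩))
      rw [aeval_eq_eval] at this
      exact this
    simp [this]
  have hle : Ideal.span (Set.range (X : Fin n → MvPolynomial (Fin n) ℂ)) ≤ J0.radical := by
    rw [Ideal.span_le]; rintro _ ⟨j, rfl⟩; exact hX j
  obtain ⟨N, hN⟩ := Ideal.exists_pow_le_of_le_radical_of_fg hle
    (Submodule.fg_span (Set.finite_range _))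
  -- Nakayama
  let q : MvPolynomial (Fin n) (Polynomial ℂ) →ₗ[Polynomial ℂ]
      (MvPolynomial (Fin n) (Polynomial ℂ) ⧸ J) := (Ideal.Quotient.mkₐ (Polynomial ℂ) J).toLinearMap
  have key : (homogeneousSubmodule (Fin n) (Polynomial ℂ) N).map q ≤
      (Ideal.span {(Polynomial.X : Polynomial ℂ)}) •
        (homogeneousSubmodule (Fin n) (Polynomial ℂ) N).map q := by
    rintro _ ⟨p, hp, rfl⟩
    have hp' : p.IsHomogeneous N := hp
    have h1 : φ p ∈ J0 := by
      apply hN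
      rw [Ideal.span_pow_eq_map_homogeneousSubmodule]
      refine ⟨map C (φ p), (hp'.map _).map _, ?_⟩
      rw [AlgHom.toLinearMap_apply, aeval_eq_eval]
      change eval _ (map C (φ p)) = _
      rw [eval_map, eval₂_eta]
    obtain ⟨g, hg, hgp⟩ := (Ideal.mem_map_iff_of_surjective φ
      (map_surjective _ (fun a => ⟨Polynomial.C a, by simp⟩))).1 h1
    have hg' : homogeneousComponent N g ∈ J := homogeneousComponent_mem_of_mem hJ hg N
    have h2 : φ (homogeneousComponent N g) = φ p := by
      have h3 : φ (homogeneousComponent N g) = homogeneousComponent N (φ g) := by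
        ext m
        simp [φ, coeff_map, coeff_homogeneousComponent]
        split_ifs <;> simp
      rw [h3, hgp]
      exact homogeneousComponent_eq_self (hp'.map _)
    have h4 : ∀ m, Polynomial.X ∣ coeff m (p - homogeneousComponent N g) := by
      intro m
      rw [Polynomial.X_dvd_iff, Polynomial.coeff_zero_eq_eval_zero]
      have := congrArg (coeff m) h2
      simp only [φ, coeff_map] at this
      simp only [coeff_sub, Polynomial.eval_sub]
      simp only [Polynomial.coe_evalRingHom] at this
      rw [this, sub_self]
    obtain ⟨r, hr⟩ := (C_dvd_iff_dvd_coeff _ _).2 h4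
    have hr' : r.IsHomogeneous N := by
      intro m hm
      have := (hp'.sub (homogeneousComponent_isHomogeneous N g))
      apply this (d := m)
      rw [hr, coeff_C_mul]
      exact mul_ne_zero Polynomial.X_ne_zero hm
    have h5 : q p = (Polynomial.X : Polynomial ℂ) • q r := by
      rw [← map_smul, ← sub_eq_zero, ← map_sub]
      refine Ideal.Quotient.eq_zero_iff_mem.2 ?_
      rw [smul_eq_C_mul, ← hr]
      simpa using hg'
    rw [h5]
    exact Submodule.smul_mem_smul (Ideal.mem_span_singleton_self _) ⟨r, hr', rfl⟩
  obtain ⟨h, hh1, hh2⟩ := Submodule.exists_sub_one_mem_and_smul_eq_zero_of_fg_of_le_smul _ _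
    ((homogeneousSubmodule_fg _ _ N).map q) key
  refine ⟨h, ?_, ?_⟩
  · rintro rfl
    rw [Ideal.mem_span_singleton, Polynomial.X_dvd_iff] at hh1
    simp at hh1
  · intro t ht x hx
    funext j
    have h6 : h • (X j ^ N : MvPolynomial (Fin n) (Polynomial ℂ)) ∈ J := by
      have := hh2 (q (X j ^ N)) ⟨X j ^ N, isHomogeneous_X_pow j N, rfl⟩
      rw [← map_smul] at this
      exact Ideal.Quotient.eq_zero_iff_mem.1 this
    let ψ : MvPolynomial (Fin n) (Polynomial ℂ) →+* ℂ :=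
      (eval x).comp (map (Polynomial.evalRingHom t))
    have h7 : J ≤ RingHom.ker ψ := by
      rw [Ideal.span_le]; rintro _ ⟨i, rfl⟩; exact hx i
    have h8 := h7 h6
    rw [RingHom.mem_ker, smul_eq_C_mul] at h8
    simp [ψ, ht] at h8
    exact h8.1

theorem ker_iff_det {k : ℕ} {A E : Type*} [AddCommGroup A] [Module ℂ A] [FiniteDimensional ℂ A]
    [AddCommGroup E] [Module ℂ E] (hA : Module.finrank ℂ A = k + 1) (M : A →ₗ[ℂ] E) :
    (∀ i : ((Fin k → ℂ) →ₗ[ℂ] A) × (E →ₗ[ℂ] (Fin k → ℂ)),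
      (LinearMap.toMatrix' (i.2 ∘ₗ M ∘ₗ i.1)).det = 0) ↔ 2 ≤ Module.finrank ℂ (LinearMap.ker M) := by
  constructor
  · intro h
    by_contra! hlt
    obtain ⟨C, hC⟩ := Submodule.exists_isCompl (LinearMap.ker M)
    have hdim := Submodule.finrank_add_eq_of_isCompl hC
    have hk : k ≤ Module.finrank ℂ C := by omega
    obtain ⟨g, hg⟩ : ∃ g : (Fin k → ℂ) →ₗ[ℂ] C, Function.Injective g := by
      obtain ⟨f, hf⟩ := exists_linearIndependent_of_le_finrank hk
      exact ⟨Fintype.linearCombination ℂ f, hf.fintypeLinearCombination_injective⟩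
    let Q : (Fin k → ℂ) →ₗ[ℂ] A := C.subtype ∘ₗ g
    have hinj : LinearMap.ker (M ∘ₗ Q) = ⊥ := by
      rw [LinearMap.ker_eq_bot']
      intro y hy
      have h1 : (g y : A) ∈ LinearMap.ker M := hy
      have h2 : (g y : A) = 0 := by
        have := Submodule.disjoint_def.1 hC.disjoint _ h1 (g y).2
        exact this
      apply hg
      rw [map_zero]
      exact Subtype.ext h2
    obtain ⟨P, hP⟩ := LinearMap.exists_leftInverse_of_injective _ hinj
    have := h (Q, P)
    simp only at this
    rw [hP] at this
    simp at this
  · rintro h ⟨Q, P⟩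
    by_contra hne
    have hinj : Function.Injective (P ∘ₗ M ∘ₗ Q) := by
      rw [LinearMap.det_toMatrix'] at hne
      have := LinearMap.isUnit_iff_isUnit_det (P ∘ₗ M ∘ₗ Q) |>.2 (isUnit_iff_ne_zero.2 hne)
      exact ((Module.End.isUnit_iff _).1 this).1
    have hQ : Function.Injective Q := fun a b hab => hinj (by simp [hab])
    have hr : Module.finrank ℂ (LinearMap.range Q) = k := by
      rw [LinearMap.finrank_range_of_inj hQ]; simp
    have hdis : LinearMap.range Q ⊓ LinearMap.ker M = ⊥ := by
      rw [eq_bot_iff]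
      rintro _ ⟨⟨y, rfl⟩, hy⟩
      have : y = 0 := by
        apply hinj
        have hy' : M (Q y) = 0 := hy
        simp [hy']
      simp [this]
    have h3 := Submodule.finrank_sup_add_finrank_inf_eq (LinearMap.range Q) (LinearMap.ker M)
    rw [hdis, finrank_bot] at h3
    have h4 := Submodule.finrank_le (LinearMap.range Q ⊔ LinearMap.ker M)
    omega

open MvPolynomial in
theorem elim_lin {n k : ℕ} {A E : Type*} [AddCommGroup A] [Module ℂ A] [FiniteDimensional ℂ A]
    [AddCommGroup E] [Module ℂ E] (hA : Module.finrank ℂ A = k + 1) (M M' : Fin n → A →ₗ[ℂ] E)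
    (h0 : ∀ x : Fin n → ℂ, 2 ≤ Module.finrank ℂ (LinearMap.ker (∑ i, x i • M i)) → x = 0) :
    ∃ h : Polynomial ℂ, h ≠ 0 ∧ ∀ t : ℂ, h.eval t ≠ 0 → ∀ x : Fin n → ℂ,
      2 ≤ Module.finrank ℂ (LinearMap.ker (∑ i, x i • (M i + t • M' i))) → x = 0 := by
  classical
  let mat : (((Fin k → ℂ) →ₗ[ℂ] A) × (E →ₗ[ℂ] (Fin k → ℂ))) →
      Matrix (Fin k) (Fin k) (MvPolynomial (Fin n) (Polynomial ℂ)) := fun i =>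
    Matrix.of fun r c => ∑ j, C (Polynomial.C (LinearMap.toMatrix' (i.2 ∘ₗ M j ∘ₗ i.1) r c) +
      Polynomial.X * Polynomial.C (LinearMap.toMatrix' (i.2 ∘ₗ M' j ∘ₗ i.1) r c)) * X j
  have hev : ∀ (t : ℂ) (x : Fin n → ℂ) i,
      eval x (map (Polynomial.evalRingHom t) (mat i).det) =
      (LinearMap.toMatrix' (i.2 ∘ₗ (∑ j, x j • (M j + t • M' j)) ∘ₗ i.1)).det := by
    intro t x i
    rw [← RingHom.comp_apply, RingHom.map_det]
    congr 1
    ext r c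
    simp only [mat, LinearMap.toMatrix'_apply, LinearMap.comp_apply, LinearMap.sum_apply,
      map_sum, Finset.sum_apply, RingHom.mapMatrix_apply, Matrix.map_apply, Matrix.of_apply,
      RingHom.comp_apply, map_mul, map_C, map_X, eval_C, eval_X, LinearMap.smul_apply,
      LinearMap.add_apply, map_smul, map_add, Pi.smul_apply, Pi.add_apply, smul_eq_mul,
      Polynomial.coe_evalRingHom, Polynomial.eval_C, Polynomial.eval_X]
    exact Finset.sum_congr rfl fun j _ => mul_comm _ _
  obtain ⟨h, hh, hh'⟩ := elim_aux (d := k) (fun i => (mat i).det) (by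
    intro i
    rw [Matrix.det_apply]
    apply IsHomogeneous.sum
    intro τ _
    rw [Units.smul_def, zsmul_eq_mul, ← map_intCast (C : Polynomial ℂ →+* _)]
    apply IsHomogeneous.C_mul
    have := IsHomogeneous.prod (Finset.univ : Finset (Fin k)) (fun j => mat i (τ j) j)
      (fun _ => 1) (by
        intro j _
        change IsHomogeneous (∑ _ : Fin n, _) 1
        apply IsHomogeneous.sum
        intro l _
        exact isHomogeneous_C_mul_X _ _)
    simpa using this) (by
      intro x hx
      apply h0
      rw [← ker_iff_det hA]
      intro i
      have := hx i
      rw [hev] at this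
      simpa using this)
  refine ⟨h, hh, fun t ht x hx => hh' t ht x fun i => ?_⟩
  rw [hev]
  exact (ker_iff_det hA _).2 hx i

/-- A 10-dimensional isotropic subspace of a 20-dimensional symplectic space is its own
orthogonal. -/
theorem lag_perp {W : Type*} [AddCommGroup W] [Module ℂ W] [FiniteDimensional ℂ W]
    (σ : W →ₗ[ℂ] W →ₗ[ℂ] ℂ) (hW : Module.finrank ℂ W = 20)
    (halt : ∀ x, σ x x = 0) (hnd : ∀ x, (∀ y, σ x y = 0) → x = 0)
    (L : Submodule ℂ W) (hL : Module.finrank ℂ L = 10) (hiso : ∀ x ∈ L, ∀ y ∈ L, σ x y = 0)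
    (x : W) (hx : ∀ y ∈ L, σ x y = 0) : x ∈ L := by
  have hskew : ∀ x y, σ x y = - σ y x := by
    intro x y
    have := halt (x + y)
    simp only [map_add, LinearMap.add_apply, halt] at this
    linear_combination this
  have hrefl : LinearMap.BilinForm.IsRefl σ := by
    intro x y h
    rw [hskew, h, neg_zero]
  have hnd' : LinearMap.BilinForm.Nondegenerate σ := by
    refine ⟨hnd, fun y hy => hnd y fun z => ?_⟩
    rw [hskew, hy, neg_zero]
  have h1 := LinearMap.BilinForm.finrank_orthogonal hnd' L
  have h2 : L ≤ LinearMap.BilinForm.orthogonal σ L := by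
    intro y hy z hz
    exact hiso z hz y hy
  have h3 := Submodule.eq_of_le_of_finrank_eq h2 (by rw [h1, hW, hL])
  rw [h3]
  intro z hz
  change σ z x = 0
  rw [hskew, hx z hz, neg_zero]

/-- Being bad is a Zariski open condition along the family `(1 + t N) A`. -/
theorem elim_fam {n : ℕ} {X W : Type*} [AddCommGroup X] [Module ℂ X]
    [AddCommGroup W] [Module ℂ W] [FiniteDimensional ℂ W]
    (m : (Fin n → ℂ) →ₗ[ℂ] X →ₗ[ℂ] W)
    (σ : W →ₗ[ℂ] W →ₗ[ℂ] ℂ) (hW : Module.finrank ℂ W = 20)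
    (halt : ∀ x, σ x x = 0) (hnd : ∀ x, (∀ y, σ x y = 0) → x = 0)
    (hF : ∀ v, v ≠ 0 → Module.finrank ℂ (LinearMap.range (m v)) = 10)
    (hiso : ∀ v β γ, σ (m v β) (m v γ) = 0)
    (A : Submodule ℂ W) (hA : Module.finrank ℂ A = 10) (N : W →ₗ[ℂ] W)
    (hbad : ∀ v, v ≠ 0 → Module.finrank ℂ ↥(A ⊓ LinearMap.range (m v)) < 2) :
    ∃ h : Polynomial ℂ, h ≠ 0 ∧ ∀ t : ℂ, h.eval t ≠ 0 → ∀ v, v ≠ 0 →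
      Module.finrank ℂ ↥(A.map (LinearMap.id + t • N) ⊓ LinearMap.range (m v)) < 2 := by
  classical
  let Mm : (Fin n → ℂ) →ₗ[ℂ] W →ₗ[ℂ] Module.Dual ℂ X :=
    LinearMap.mk₂ ℂ (fun v x => (σ x) ∘ₗ (m v))
      (by intros; ext; simp) (by intros; ext; simp) (by intros; ext; simp) (by intros; ext; simp)
  have hMm : ∀ v x β, Mm v x β = σ x (m v β) := fun _ _ _ => rfl
  let M : Fin n → A →ₗ[ℂ] Module.Dual ℂ X := fun i => Mm (Pi.single i 1) ∘ₗ A.subtype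
  let M' : Fin n → A →ₗ[ℂ] Module.Dual ℂ X := fun i => Mm (Pi.single i 1) ∘ₗ N ∘ₗ A.subtype
  have hsum : ∀ (v : Fin n → ℂ) (y : W), ∑ i, v i • Mm (Pi.single i 1) y = Mm v y := by
    intro v y
    conv_rhs => rw [pi_eq_sum_univ' v]
    simp [map_sum, LinearMap.sum_apply]
  have hker : ∀ (t : ℂ) (v : Fin n → ℂ) (a : A),
      (∑ i, v i • (M i + t • M' i)) a = Mm v ((LinearMap.id + t • N : W →ₗ[ℂ] W) a) := by
    intro t v a
    rw [← hsum]
    simp [M, M', LinearMap.sum_apply]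
  have hker0 : ∀ (v : Fin n → ℂ) (a : A), (∑ i, v i • (M i)) a = Mm v a := by
    intro v a
    have := hker 0 v a
    simpa using this
  obtain ⟨h, hh, hh'⟩ := elim_lin (k := 9) hA M M' (by
    intro v hv
    by_contra hne
    have h1 := hbad v hne
    have h2 : (LinearMap.ker (∑ i, v i • M i)).map A.subtype ≤ A ⊓ LinearMap.range (m v) := by
      rintro _ ⟨a, ha, rfl⟩
      refine ⟨a.2, ?_⟩
      have ha' : (∑ i, v i • M i) a = 0 := ha
      rw [hker0] at ha'
      apply lag_perp σ hW halt hnd _ (hF v hne)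
      · rintro _ ⟨β, rfl⟩ _ ⟨γ, rfl⟩
        exact hiso _ _ _
      · rintro _ ⟨β, rfl⟩
        exact LinearMap.congr_fun ha' β
    have h3 := Submodule.finrank_mono h2
    rw [Submodule.finrank_map_subtype_eq] at h3
    omega)
  refine ⟨h, hh, fun t ht v hv => ?_⟩
  by_contra! h1
  apply hv
  apply hh' t ht v
  refine h1.trans ?_
  have h2 : A.map (LinearMap.id + t • N) ⊓ LinearMap.range (m v) ≤
      (LinearMap.ker (∑ i, v i • (M i + t • M' i))).map ((LinearMap.id + t • N) ∘ₗ A.subtype) := by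
    rintro _ ⟨⟨a, ha, rfl⟩, ⟨β, hβ⟩⟩
    refine ⟨⟨a, ha⟩, ?_, rfl⟩
    change (∑ i, v i • (M i + t • M' i)) ⟨a, ha⟩ = 0
    rw [hker]
    ext γ
    rw [hMm]
    change σ ((LinearMap.id + t • N : W →ₗ[ℂ] W) a) _ = 0
    rw [← hβ, hiso]
  exact (Submodule.finrank_mono h2).trans (Submodule.finrank_map_le _ _)

/-- The implicit function theorem step. -/
theorem local_solve {V X W Q : Type*} [NormedAddCommGroup V] [NormedSpace ℂ V]
    [FiniteDimensional ℂ V] [NormedAddCommGroup X] [NormedSpace ℂ X] [FiniteDimensional ℂ X]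
    [NormedAddCommGroup W] [NormedSpace ℂ W] [FiniteDimensional ℂ W]
    [NormedAddCommGroup Q] [NormedSpace ℂ Q] [FiniteDimensional ℂ Q]
    (m : V →ₗ[ℂ] X →ₗ[ℂ] W) (Λ : (W × W) →ₗ[ℂ] Q) (v : V) (β₁ β₂ : X)
    (hsurj : ∀ y : Q, ∃ w γ₁ γ₂, Λ (m v γ₁ + m w β₁, m v γ₂ + m w β₂) = y) :
    ∀ᶠ y in nhds (Λ (m v β₁, m v β₂)), ∃ v' b₁ b₂, Λ (m v' b₁, m v' b₂) = y := by
  have : CompleteSpace V := FiniteDimensional.complete ℂ V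
  have : CompleteSpace X := FiniteDimensional.complete ℂ X
  have : CompleteSpace Q := FiniteDimensional.complete ℂ Q
  let mc := m.toContinuousBilinearMap
  let Λc := LinearMap.toContinuousLinearMap Λ
  let z0 : V × X × X := (v, β₁, β₂)
  have h1 : HasStrictFDerivAt (fun z : V × X × X => z.1) (ContinuousLinearMap.fst ℂ V (X × X)) z0 :=
    hasStrictFDerivAt_fst
  have h23 : HasStrictFDerivAt (fun z : V × X × X => z.2) (ContinuousLinearMap.snd ℂ V (X × X)) z0 :=
    hasStrictFDerivAt_snd
  have h2 := h23.fst
  have h3 := h23.snd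
  have h4 := mc.hasStrictFDerivAt_of_bilinear h1 h2
  have h5 := mc.hasStrictFDerivAt_of_bilinear h1 h3
  have h6 := Λc.hasStrictFDerivAt.comp z0 (h4.prodMk h5)
  have h7 := h6.map_nhds_eq_of_surj (by
    rw [LinearMap.range_eq_top]
    intro y
    obtain ⟨w, γ₁, γ₂, h⟩ := hsurj y
    refine ⟨(w, γ₁, γ₂), ?_⟩
    rw [← h]
    simp [Λc, mc, z0, ContinuousLinearMap.precompR, ContinuousLinearMap.precompL])
  have h8 : Λc (mc z0.1 z0.2.1, mc z0.1 z0.2.2) = Λ (m v β₁, m v β₂) := rfl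
  rw [h8] at h7
  rw [← h7, Filter.eventually_map]
  exact Filter.Eventually.of_forall fun z => ⟨z.1, z.2.1, z.2.2, rfl⟩

theorem transversal_case {n p : ℕ} {W : Type*}
    [NormedAddCommGroup W] [NormedSpace ℂ W] [FiniteDimensional ℂ W]
    (m : (Fin n → ℂ) →ₗ[ℂ] (Fin p → ℂ) →ₗ[ℂ] W)
    (σ : W →ₗ[ℂ] W →ₗ[ℂ] ℂ) (hW : Module.finrank ℂ W = 20)
    (halt : ∀ x, σ x x = 0) (hnd : ∀ x, (∀ y, σ x y = 0) → x = 0)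
    (hF : ∀ v, v ≠ 0 → Module.finrank ℂ (LinearMap.range (m v)) = 10)
    (hiso : ∀ v β γ, σ (m v β) (m v γ) = 0)
    (v₀ : Fin n → ℂ) (hv₀ : v₀ ≠ 0) (β₁ β₂ : Fin p → ℂ)
    (hsurj : ∀ c₁ c₂ c₃ : ℂ, ∃ w, σ (m v₀ β₁) (m w β₁) = c₁ ∧ σ (m v₀ β₁) (m w β₂) = c₂ ∧
      σ (m v₀ β₂) (m w β₂) = c₃)
    (A : Submodule ℂ W) (hA : Module.finrank ℂ A = 10) (hlag : ∀ x ∈ A, ∀ y ∈ A, σ x y = 0)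
    (htr : A ⊓ LinearMap.range (m v₀) = ⊥) :
    ∃ v, v ≠ 0 ∧ 2 ≤ Module.finrank ℂ ↥(A ⊓ LinearMap.range (m v)) := by
  classical
  by_contra! hbad
  have hskew : ∀ x y, σ x y = - σ y x := by
    intro x y
    have := halt (x + y)
    simp only [map_add, LinearMap.add_apply, halt] at this
    linear_combination this
  have hpol : ∀ v w β γ, σ (m v β) (m w γ) = σ (m v γ) (m w β) := by
    intro v w β γ
    have := hiso (v + w) β γ
    simp only [map_add, LinearMap.add_apply, hiso] at this
    have h2 := hskew (m w β) (m v γ)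
    linear_combination this - h2
  have htop : A ⊔ LinearMap.range (m v₀) = ⊤ := by
    apply Submodule.eq_top_of_finrank_eq
    have := Submodule.finrank_sup_add_finrank_inf_eq A (LinearMap.range (m v₀))
    rw [htr, finrank_bot, hA, hF v₀ hv₀] at this
    omega
  have hdec : ∀ x : W, ∃ a ∈ A, ∃ γ, a + m v₀ γ = x := by
    intro x
    have : x ∈ A ⊔ LinearMap.range (m v₀) := by rw [htop]; trivial
    obtain ⟨a, ha, _, ⟨γ, rfl⟩, h⟩ := Submodule.mem_sup.1 this
    exact ⟨a, ha, γ, h⟩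
  obtain ⟨w₁, hw1, hw2, hw3⟩ := hsurj 1 0 0
  obtain ⟨w₂, hw4, hw5, hw6⟩ := hsurj 0 0 1
  obtain ⟨a₁, ha₁, γ₁, hγ₁⟩ := hdec (m w₁ β₁)
  obtain ⟨a₂, ha₂, γ₂, hγ₂⟩ := hdec (m w₂ β₂)
  set f₁ := m v₀ β₁ with hf₁
  set f₂ := m v₀ β₂ with hf₂
  have e11 : σ f₁ a₁ = 1 := by
    rw [eq_sub_of_add_eq hγ₁, map_sub, hw1, hf₁, hiso, sub_zero]
  have e21 : σ f₂ a₁ = 0 := by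
    rw [eq_sub_of_add_eq hγ₁, map_sub, hf₂, hiso, sub_zero, hpol, ← hf₁, hw2]
  have e12 : σ f₁ a₂ = 0 := by
    rw [eq_sub_of_add_eq hγ₂, map_sub, hw5, hf₁, hiso, sub_zero]
  have e22 : σ f₂ a₂ = 1 := by
    rw [eq_sub_of_add_eq hγ₂, map_sub, hw6, hf₂, hiso, sub_zero]
  set u₁ := a₁ + f₁ with hu₁
  set u₂ := a₂ + f₂ with hu₂
  have hu12 : σ u₁ u₂ = 0 := by
    have := hskew a₁ f₂
    simp only [hu₁, hu₂, map_add, LinearMap.add_apply, hlag a₁ ha₁ a₂ ha₂, e12, this, e21]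
    rw [hf₁, hf₂, hiso]; simp
  let N : W →ₗ[ℂ] W := (σ.flip u₁).smulRight u₁ + (σ.flip u₂).smulRight u₂
  have hN : ∀ x, N x = σ x u₁ • u₁ + σ x u₂ • u₂ := fun x => by simp [N]
  obtain ⟨h, hh, hh'⟩ := elim_fam m σ hW halt hnd hF hiso A hA N hbad
  let e : (W ⧸ A) ≃ₗ[ℂ] (Fin (Module.finrank ℂ (W ⧸ A)) → ℂ) :=
    LinearEquiv.ofFinrankEq _ _ (by simp)
  let π : W →ₗ[ℂ] (Fin (Module.finrank ℂ (W ⧸ A)) → ℂ) := e.toLinearMap ∘ₗ A.mkQ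
  have hπ : ∀ x, π x = 0 ↔ x ∈ A := by intro x; simp [π]
  have hπs : ∀ y, ∃ x, π x = y := by
    intro y
    obtain ⟨x, hx⟩ := A.mkQ_surjective (e.symm y)
    exact ⟨x, by simp only [π, LinearMap.comp_apply, hx]; simp⟩
  let p1 := LinearMap.fst ℂ W W
  let p2 := LinearMap.snd ℂ W W
  let Λ := (π ∘ₗ p1).prod ((π ∘ₗ p2).prod
    ((σ u₁ ∘ₗ p1).prod ((σ u₁ ∘ₗ p2).prod (σ u₂ ∘ₗ p2))))
  have hΛ : ∀ x y, Λ (x, y) = (π x, π y, σ u₁ x, σ u₁ y, σ u₂ y) := fun _ _ => rfl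
  have hev := local_solve m Λ v₀ β₁ β₂ (by
    rintro ⟨y₁, y₂, c₁, c₂, c₃⟩
    obtain ⟨x₁, hx₁⟩ := hπs y₁
    obtain ⟨x₂, hx₂⟩ := hπs y₂
    obtain ⟨b₁, hb₁, δ₁, hδ₁⟩ := hdec x₁
    obtain ⟨b₂, hb₂, δ₂, hδ₂⟩ := hdec x₂
    obtain ⟨w, h1, h2, h3⟩ := hsurj (c₁ - σ u₁ (m v₀ δ₁)) (c₂ - σ u₁ (m v₀ δ₂))
      (c₃ - σ u₂ (m v₀ δ₂))
    obtain ⟨d₁, hd₁, ε₁, hε₁⟩ := hdec (m w β₁)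
    obtain ⟨d₂, hd₂, ε₂, hε₂⟩ := hdec (m w β₂)
    refine ⟨w, δ₁ - ε₁, δ₂ - ε₂, ?_⟩
    have k1 : m v₀ (δ₁ - ε₁) + m w β₁ = m v₀ δ₁ + d₁ := by
      rw [← hε₁, map_sub]; abel
    have k2 : m v₀ (δ₂ - ε₂) + m w β₂ = m v₀ δ₂ + d₂ := by
      rw [← hε₂, map_sub]; abel
    have l1 : π (m v₀ δ₁) = y₁ := by
      rw [← hx₁, ← hδ₁, map_add, (hπ b₁).2 hb₁, zero_add]
    have l2 : π (m v₀ δ₂) = y₂ := by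
      rw [← hx₂, ← hδ₂, map_add, (hπ b₂).2 hb₂, zero_add]
    have q1 : σ f₁ d₁ = σ f₁ (m w β₁) := by
      rw [← hε₁, map_add, hf₁, hiso, add_zero]
    have q2 : σ f₁ d₂ = σ f₁ (m w β₂) := by
      rw [← hε₂, map_add, hf₁, hiso, add_zero]
    have q3 : σ f₂ d₂ = σ f₂ (m w β₂) := by
      rw [← hε₂, map_add, hf₂, hiso, add_zero]
    have r1 : σ u₁ d₁ = σ f₁ (m w β₁) := by
      rw [hu₁, map_add, LinearMap.add_apply, hlag a₁ ha₁ d₁ hd₁, zero_add, q1]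
    have r2 : σ u₁ d₂ = σ f₁ (m w β₂) := by
      rw [hu₁, map_add, LinearMap.add_apply, hlag a₁ ha₁ d₂ hd₂, zero_add, q2]
    have r3 : σ u₂ d₂ = σ f₂ (m w β₂) := by
      rw [hu₂, map_add, LinearMap.add_apply, hlag a₂ ha₂ d₂ hd₂, zero_add, q3]
    rw [k1, k2, hΛ]
    simp only [map_add, l1, l2, (hπ d₁).2 hd₁, (hπ d₂).2 hd₂, add_zero, r1, r2, r3, h1, h2, h3]
    simp)
  have s1 : π f₁ = π u₁ := by rw [hu₁, map_add, (hπ a₁).2 ha₁, zero_add]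
  have s2 : π f₂ = π u₂ := by rw [hu₂, map_add, (hπ a₂).2 ha₂, zero_add]
  have s3 : σ u₁ f₁ = -1 := by
    rw [hu₁, map_add, LinearMap.add_apply, halt, add_zero, hskew, e11]
  have s4 : σ u₁ f₂ = 0 := by
    rw [hu₁, map_add, LinearMap.add_apply, hskew, e21, hf₁, hf₂, hiso]; simp
  have s5 : σ u₂ f₂ = -1 := by
    rw [hu₂, map_add, LinearMap.add_apply, halt, add_zero, hskew, e22]
  rw [← hf₁, ← hf₂, hΛ, s1, s2, s3, s4, s5] at hev
  have hcont : Filter.Tendsto (fun c : ℂ => (π u₁, π u₂, c, (0 : ℂ), c)) (nhds (-1))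
      (nhds (π u₁, π u₂, -1, 0, -1)) := by
    apply Continuous.tendsto'
    · fun_prop
    · rfl
  have hev2 := hcont.eventually hev
  have hev3 : ∀ᶠ c : ℂ in nhds (-1), h.eval (-c⁻¹) = 0 := by
    have hne : ∀ᶠ c : ℂ in nhds (-1), c ≠ 0 := eventually_ne_nhds (by norm_num)
    filter_upwards [hev2, hne] with c hc hc0
    obtain ⟨v, b₁, b₂, hvb⟩ := hc
    rw [hΛ] at hvb
    simp only [Prod.mk.injEq] at hvb
    obtain ⟨g1, g2, g3, g4, g5⟩ := hvb
    by_contra hne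
    set x₁ := m v b₁ with hx₁
    set x₂ := m v b₂ with hx₂
    have k1 : u₁ - x₁ ∈ A := by rw [← hπ, map_sub, g1, sub_self]
    have k2 : u₂ - x₂ ∈ A := by rw [← hπ, map_sub, g2, sub_self]
    have g6 : σ u₂ x₁ = 0 := by
      have := hlag _ k1 _ k2
      simp only [map_sub, LinearMap.sub_apply, hu12, g4] at this
      rw [hx₁, hx₂, hiso, ← hx₁, hskew] at this
      linear_combination this
    have hv : v ≠ 0 := by
      rintro rfl
      rw [hx₁] at g3
      simp at g3
      exact hc0 g3.symm
    have hlt := hh' _ hne v hv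
    have mem1 : x₁ ∈ A.map (LinearMap.id + (-c⁻¹) • N) ⊓ LinearMap.range (m v) := by
      refine ⟨⟨-(u₁ - x₁), A.neg_mem k1, ?_⟩, ⟨b₁, rfl⟩⟩
      have i1 : σ (-(u₁ - x₁)) u₁ = -c := by
        rw [hskew]; simp [halt, g3]
      have i2 : σ (-(u₁ - x₁)) u₂ = 0 := by
        rw [hskew]
        have := hskew u₂ u₁
        simp [g6, this, hu12]
      simp only [LinearMap.add_apply, LinearMap.id_apply, LinearMap.smul_apply, hN, i1, i2]
      rw [zero_smul, add_zero, smul_smul, neg_mul_neg, inv_mul_cancel₀ hc0, one_smul]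
      abel
    have mem2 : x₂ ∈ A.map (LinearMap.id + (-c⁻¹) • N) ⊓ LinearMap.range (m v) := by
      refine ⟨⟨-(u₂ - x₂), A.neg_mem k2, ?_⟩, ⟨b₂, rfl⟩⟩
      have i1 : σ (-(u₂ - x₂)) u₂ = -c := by
        rw [hskew]; simp [halt, g5]
      have i2 : σ (-(u₂ - x₂)) u₁ = 0 := by
        rw [hskew]
        simp [g4, hu12]
      simp only [LinearMap.add_apply, LinearMap.id_apply, LinearMap.smul_apply, hN, i1, i2]
      rw [zero_smul, zero_add, smul_smul, neg_mul_neg, inv_mul_cancel₀ hc0, one_smul]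
      abel
    have hli : LinearIndependent ℂ ![x₁, x₂] := by
      rw [LinearIndependent.pair_iff]
      intro s t hst
      have t1 := congrArg (σ u₁) hst
      have t2 := congrArg (σ u₂) hst
      simp only [map_add, map_smul, g3, g4, g5, g6, smul_eq_mul, map_zero, mul_zero, add_zero,
        zero_add, mul_eq_zero, hc0, or_false] at t1 t2
      exact ⟨t1, t2⟩
    have hsp : Submodule.span ℂ (Set.range ![x₁, x₂]) ≤
        A.map (LinearMap.id + (-c⁻¹) • N) ⊓ LinearMap.range (m v) := by
      rw [Submodule.span_le]
      rintro _ ⟨i, rfl⟩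
      fin_cases i
      · exact mem1
      · exact mem2
    have := Submodule.finrank_mono hsp
    rw [finrank_span_eq_card hli] at this
    simp at this
    omega
  -- infinitely many roots
  have hinf : Set.Infinite {c : ℂ | h.eval (-c⁻¹) = 0} := infinite_of_mem_nhds (-1) hev3
  apply hh
  apply Polynomial.eq_zero_of_infinite_isRoot
  have hinj : Set.InjOn (fun c : ℂ => -c⁻¹) {c : ℂ | h.eval (-c⁻¹) = 0} := by
    intro a _ b _ hab
    simpa using hab
  refine (hinf.image hinj).mono ?_
  rintro _ ⟨c, hc, rfl⟩
  exact hc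

theorem general_case {n p : ℕ} {W : Type*}
    [NormedAddCommGroup W] [NormedSpace ℂ W] [FiniteDimensional ℂ W]
    (m : (Fin n → ℂ) →ₗ[ℂ] (Fin p → ℂ) →ₗ[ℂ] W)
    (σ : W →ₗ[ℂ] W →ₗ[ℂ] ℂ) (hW : Module.finrank ℂ W = 20)
    (halt : ∀ x, σ x x = 0) (hnd : ∀ x, (∀ y, σ x y = 0) → x = 0)
    (hF : ∀ v, v ≠ 0 → Module.finrank ℂ (LinearMap.range (m v)) = 10)
    (hiso : ∀ v β γ, σ (m v β) (m v γ) = 0)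
    (v₀ : Fin n → ℂ) (hv₀ : v₀ ≠ 0) (β₁ β₂ : Fin p → ℂ)
    (hsurj : ∀ c₁ c₂ c₃ : ℂ, ∃ w, σ (m v₀ β₁) (m w β₁) = c₁ ∧ σ (m v₀ β₁) (m w β₂) = c₂ ∧
      σ (m v₀ β₂) (m w β₂) = c₃)
    (A : Submodule ℂ W) (hA : Module.finrank ℂ A = 10) (hlag : ∀ x ∈ A, ∀ y ∈ A, σ x y = 0) :
    ∃ v, v ≠ 0 ∧ 2 ≤ Module.finrank ℂ ↥(A ⊓ LinearMap.range (m v)) := by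
  classical
  by_contra! hbad
  by_cases htr : A ⊓ LinearMap.range (m v₀) = ⊥
  · obtain ⟨v, hv, hv2⟩ := transversal_case m σ hW halt hnd hF hiso v₀ hv₀ β₁ β₂ hsurj A hA hlag htr
    exact absurd hv2 (not_le.2 (hbad v hv))
  have hskew : ∀ x y, σ x y = - σ y x := by
    intro x y
    have := halt (x + y)
    simp only [map_add, LinearMap.add_apply, halt] at this
    linear_combination this
  obtain ⟨d, hd, hd0⟩ := Submodule.exists_mem_ne_zero_of_ne_bot htr
  have hspan : ∀ x ∈ A ⊓ LinearMap.range (m v₀), ∃ c : ℂ, c • d = x := by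
    intro x hx
    have h1 : Module.finrank ℂ ↥(A ⊓ LinearMap.range (m v₀)) ≤ 1 := by
      have := hbad v₀ hv₀
      omega
    obtain ⟨y, hy⟩ := finrank_le_one_iff.1 h1
    obtain ⟨c, hc⟩ := hy ⟨d, hd⟩
    obtain ⟨c', hc'⟩ := hy ⟨x, hx⟩
    have hc1 : c • (y : W) = d := congrArg Subtype.val hc
    have hc2 : c' • (y : W) = x := congrArg Subtype.val hc'
    have hcne : c ≠ 0 := by rintro rfl; apply hd0; rw [← hc1, zero_smul]
    refine ⟨c' * c⁻¹, ?_⟩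
    rw [← hc1, smul_smul, mul_assoc, inv_mul_cancel₀ hcne, mul_one, hc2]
  obtain ⟨u, hu⟩ : ∃ u, σ d u ≠ 0 := by
    by_contra! h
    exact hd0 (hnd d h)
  let N : W →ₗ[ℂ] W := (σ.flip u).smulRight u
  have hN : ∀ x, N x = σ x u • u := fun x => by simp [N]
  obtain ⟨h, hh, hh'⟩ := elim_fam m σ hW halt hnd hF hiso A hA N hbad
  have hroot : ∀ s : ℂ, s ≠ 0 → h.eval s = 0 := by
    intro s hs
    by_contra hne
    have hT : ∀ x, (LinearMap.id + s • N : W →ₗ[ℂ] W) x = x + (s * σ x u) • u := by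
      intro x; simp [hN, smul_smul]
    have hσT : ∀ x y, σ ((LinearMap.id + s • N : W →ₗ[ℂ] W) x) ((LinearMap.id + s • N : W →ₗ[ℂ] W) y) = σ x y := by
      intro x y
      have := hskew u y
      rw [hT, hT]
      simp [halt, this]
      ring
    have hTinj : Function.Injective (LinearMap.id + s • N : W →ₗ[ℂ] W) := by
      rw [← LinearMap.ker_eq_bot, LinearMap.ker_eq_bot']
      intro x hx
      apply hnd
      intro y
      rw [← hσT, hx]; simp
    obtain ⟨v, hv, hv2⟩ := transversal_case m σ hW halt hnd hF hiso v₀ hv₀ β₁ β₂ hsurj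
      (A.map (LinearMap.id + s • N)) (by rw [← (Submodule.equivMapOfInjective _ hTinj A).finrank_eq, hA]) (by
        rintro _ ⟨x, hx, rfl⟩ _ ⟨y, hy, rfl⟩
        rw [hσT, hlag x hx y hy]) (by
        rw [eq_bot_iff]
        rintro _ ⟨⟨x, hx, rfl⟩, ⟨γ, hγ⟩⟩
        rw [hT] at hγ
        obtain ⟨δ, hδ⟩ := hd.2
        have h1 : σ d (m v₀ γ) = 0 := by rw [← hδ, hiso]
        rw [hγ, map_add, hlag d hd.1 x hx, map_smul, zero_add, smul_eq_mul] at h1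
        have h2 : σ x u = 0 := by simpa [hs, hu] using h1
        rw [h2, mul_zero, zero_smul, add_zero] at hγ
        obtain ⟨c, hc⟩ := hspan x ⟨hx, γ, hγ⟩
        have h3 : c = 0 := by
          rw [← hc] at h2
          simpa [hu] using h2
        rw [← hc, h3]; simp)
    exact absurd hv2 (not_le.2 (hh' s hne v hv))
  apply hh
  apply Polynomial.eq_zero_of_infinite_isRoot
  refine (Set.Finite.infinite_compl (Set.finite_singleton (0 : ℂ))).mono ?_
  intro s hs
  exact hroot s hs

section ext
variable {V : Type*} [AddCommGroup V] [Module ℂ V]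

/-- Contraction by a covector, on the exterior algebra. -/
noncomputable def ctr (d : Module.Dual ℂ V) : ExteriorAlgebra ℂ V →ₗ[ℂ] ExteriorAlgebra ℂ V :=
  CliffordAlgebra.contractLeft (Q := (0 : QuadraticForm ℂ V)) d

theorem ctr_ι_mul (d : Module.Dual ℂ V) (a : V) (b : ExteriorAlgebra ℂ V) :
    ctr d (ι ℂ a * b) = d a • b - ι ℂ a * ctr d b :=
  CliffordAlgebra.contractLeft_ι_mul (Q := (0 : QuadraticForm ℂ V)) d a b

theorem ctr_algebraMap (d : Module.Dual ℂ V) (r : ℂ) : ctr d (algebraMap ℂ _ r) = 0 :=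
  CliffordAlgebra.contractLeft_algebraMap (Q := (0 : QuadraticForm ℂ V)) d r

theorem ctr_one (d : Module.Dual ℂ V) : ctr d 1 = 0 := by
  simpa using ctr_algebraMap d 1

theorem ι_anti (a b : V) : ι ℂ a * ι ℂ b = -(ι ℂ b * ι ℂ a) := by
  rw [eq_neg_iff_add_eq_zero]; exact ι_add_mul_swap a b

theorem ι_mul_mem (a : V) {n : ℕ} {x : ExteriorAlgebra ℂ V} (hx : x ∈ ⋀[ℂ]^n V) :
    ι ℂ a * x ∈ ⋀[ℂ]^(n + 1) V := by
  change _ ∈ LinearMap.range (ι ℂ) ^ (n + 1)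
  rw [pow_succ']
  exact Submodule.mul_mem_mul ⟨a, rfl⟩ hx

/-- Induction principle: linear statements on `⋀^(n+1)` can be checked on `a ∧ b`. -/
theorem ext_succ_induction {n : ℕ} {C : ExteriorAlgebra ℂ V → Prop}
    (hmul : ∀ a, ∀ b ∈ ⋀[ℂ]^n V, C (ι ℂ a * b)) (hadd : ∀ x y, C x → C y → C (x + y))
    {x : ExteriorAlgebra ℂ V} (hx : x ∈ ⋀[ℂ]^(n + 1) V) : C x := by
  change _ ∈ LinearMap.range (ι ℂ) ^ (n + 1) at hx
  rw [pow_succ'] at hx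
  refine Submodule.mul_induction_on hx ?_ hadd
  rintro _ ⟨a, rfl⟩ b hb
  exact hmul a b hb

theorem ext_zero {x : ExteriorAlgebra ℂ V} (hx : x ∈ ⋀[ℂ]^0 V) : ∃ r, algebraMap ℂ _ r = x := by
  change _ ∈ LinearMap.range (ι ℂ) ^ 0 at hx
  rw [pow_zero] at hx
  exact Submodule.mem_one.1 hx

theorem ctr_mem (d : Module.Dual ℂ V) : ∀ (n : ℕ) {x : ExteriorAlgebra ℂ V},
    x ∈ ⋀[ℂ]^(n + 1) V → ctr d x ∈ ⋀[ℂ]^n V := by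
  intro n
  induction n with
  | zero =>
    intro x hx
    refine ext_succ_induction (C := fun x => ctr d x ∈ ⋀[ℂ]^0 V) ?_ ?_ hx
    · intro a b hb
      obtain ⟨r, rfl⟩ := ext_zero hb
      rw [ctr_ι_mul, ctr_algebraMap, mul_zero, sub_zero]
      exact Submodule.smul_mem _ _ hb
    · intro x y hx hy
      rw [map_add]; exact Submodule.add_mem _ hx hy
  | succ k ih =>
    intro x hx
    refine ext_succ_induction (C := fun x => ctr d x ∈ ⋀[ℂ]^(k+1) V) ?_ ?_ hx
    · intro a b hb
      rw [ctr_ι_mul]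
      exact Submodule.sub_mem _ (Submodule.smul_mem _ _ hb) (ι_mul_mem a (ih hb))
    · intro x y hx hy
      rw [map_add]; exact Submodule.add_mem _ hx hy

theorem exact_mul (v : V) (hv : v ≠ 0) (n : ℕ) {x : ExteriorAlgebra ℂ V}
    (hx : x ∈ ⋀[ℂ]^(n + 1) V) (h : ι ℂ v * x = 0) : ∃ y ∈ ⋀[ℂ]^n V, ι ℂ v * y = x := by
  obtain ⟨d, hd⟩ := Module.Projective.exists_dual_eq_one ℂ hv
  refine ⟨ctr d x, ctr_mem d n hx, ?_⟩
  have h1 := ctr_ι_mul d v x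
  rw [h, map_zero, hd, one_smul] at h1
  exact (sub_eq_zero.1 h1.symm).symm

theorem finrank_mul_succ [FiniteDimensional ℂ V] (v : V) (hv : v ≠ 0) (n : ℕ) :
    Module.finrank ℂ ((⋀[ℂ]^(n + 1) V).map (LinearMap.mulLeft ℂ (ι ℂ v))) +
    Module.finrank ℂ ((⋀[ℂ]^n V).map (LinearMap.mulLeft ℂ (ι ℂ v))) =
    (Module.finrank ℂ V).choose (n + 1) := by
  let g := (LinearMap.mulLeft ℂ (ι ℂ v)).domRestrict (⋀[ℂ]^(n + 1) V)
  have h1 := LinearMap.finrank_range_add_finrank_ker g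
  rw [exteriorPower.finrank_eq] at h1
  have h2 : LinearMap.range g = (⋀[ℂ]^(n + 1) V).map (LinearMap.mulLeft ℂ (ι ℂ v)) := by
    simp [g, LinearMap.range_domRestrict]
  have h3 : (LinearMap.ker g).map (⋀[ℂ]^(n + 1) V).subtype =
      (⋀[ℂ]^n V).map (LinearMap.mulLeft ℂ (ι ℂ v)) := by
    ext x
    constructor
    · rintro ⟨y, hy, rfl⟩
      obtain ⟨z, hz, hzy⟩ := exact_mul v hv n y.2 hy
      exact ⟨z, hz, hzy⟩
    · rintro ⟨z, hz, rfl⟩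
      refine ⟨⟨ι ℂ v * z, ι_mul_mem v hz⟩, ?_, rfl⟩
      change ι ℂ v * (ι ℂ v * z) = 0
      rw [← mul_assoc, ι_sq_zero, zero_mul]
  rw [← h2, ← h3, Submodule.finrank_map_subtype_eq, h1]

theorem finrank_F [FiniteDimensional ℂ V] (hV : Module.finrank ℂ V = 6) (v : V) (hv : v ≠ 0) :
    Module.finrank ℂ ((⋀[ℂ]^2 V).map (LinearMap.mulLeft ℂ (ι ℂ v))) = 10 := by
  have h2 := finrank_mul_succ v hv 1
  have h1 := finrank_mul_succ v hv 0
  have h0 : Module.finrank ℂ ((⋀[ℂ]^0 V).map (LinearMap.mulLeft ℂ (ι ℂ v))) = 1 := by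
    have : (⋀[ℂ]^0 V).map (LinearMap.mulLeft ℂ (ι ℂ v)) = Submodule.span ℂ {ι ℂ v} := by
      ext x
      rw [Submodule.mem_span_singleton]
      constructor
      · rintro ⟨y, hy, rfl⟩
        obtain ⟨r, rfl⟩ := ext_zero hy
        exact ⟨r, by simp [Algebra.algebraMap_eq_smul_one]⟩
      · rintro ⟨r, rfl⟩
        refine ⟨algebraMap ℂ _ r, ?_, by simp [Algebra.algebraMap_eq_smul_one]⟩
        change _ ∈ LinearMap.range (ι ℂ) ^ 0
        rw [pow_zero]
        exact Submodule.mem_one.2 ⟨r, rfl⟩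
    rw [this]
    apply finrank_span_singleton
    simpa using hv
  rw [hV] at h1 h2
  have e1 : Nat.choose 6 1 = 6 := rfl
  have e2 : Nat.choose 6 2 = 15 := rfl
  simp only [zero_add, Nat.reduceAdd] at h1 h2
  omega

theorem anti_one (v : V) : ∀ (n : ℕ) {x : ExteriorAlgebra ℂ V}, x ∈ ⋀[ℂ]^n V →
    ι ℂ v * x = (-1 : ℂ) ^ n • (x * ι ℂ v) := by
  intro n
  induction n with
  | zero =>
    intro x hx
    obtain ⟨r, rfl⟩ := ext_zero hx
    simp [Algebra.commutes]
  | succ k ih =>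
    intro x hx
    refine ext_succ_induction (C := fun x => ι ℂ v * x = (-1 : ℂ) ^ (k+1) • (x * ι ℂ v)) ?_ ?_ hx
    · intro a b hb
      rw [← mul_assoc, ι_anti, neg_mul, mul_assoc, ih hb, pow_succ]
      simp [mul_assoc]
    · intro x y hx hy
      rw [mul_add, hx, hy, add_mul, smul_add]

theorem anti_three {y : ExteriorAlgebra ℂ V} (hy : y ∈ ⋀[ℂ]^3 V) :
    ∀ (n : ℕ) {x : ExteriorAlgebra ℂ V}, x ∈ ⋀[ℂ]^n V → x * y = (-1 : ℂ) ^ n • (y * x) := by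
  intro n
  induction n with
  | zero =>
    intro x hx
    obtain ⟨r, rfl⟩ := ext_zero hx
    simp [Algebra.commutes]
  | succ k ih =>
    intro x hx
    refine ext_succ_induction (C := fun x => x * y = (-1 : ℂ) ^ (k+1) • (y * x)) ?_ ?_ hx
    · intro a b hb
      have := anti_one a 3 hy
      rw [mul_assoc, ih hb, mul_smul_comm, ← mul_assoc, this, pow_succ, smul_mul_assoc, smul_smul,
        mul_assoc]
      norm_num [pow_succ]
    · intro x z hx hz
      rw [mul_add, add_mul, hx, hz, smul_add]

theorem isotropic_F (v : V) {x y : ExteriorAlgebra ℂ V} (hx : x ∈ ⋀[ℂ]^2 V) :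
    (ι ℂ v * x) * (ι ℂ v * y) = 0 := by
  rw [anti_one v 2 hx, smul_mul_assoc, mul_assoc, ← mul_assoc (ι ℂ v) (ι ℂ v) y, ι_sq_zero]
  simp

theorem euler {κ : Type*} [Fintype κ] (b : Module.Basis κ ℂ V) : ∀ (n : ℕ) {x : ExteriorAlgebra ℂ V},
    x ∈ ⋀[ℂ]^n V → ∑ i, ι ℂ (b i) * ctr (b.coord i) x = (n : ℂ) • x := by
  intro n
  induction n with
  | zero =>
    intro x hx
    obtain ⟨r, rfl⟩ := ext_zero hx
    simp [ctr_algebraMap]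
  | succ k ih =>
    intro x hx
    refine ext_succ_induction
      (C := fun x => ∑ i, ι ℂ (b i) * ctr (b.coord i) x = ((k + 1 : ℕ) : ℂ) • x) ?_ ?_ hx
    · intro a c hc
      have h1 : ∀ i, ι ℂ (b i) * ctr (b.coord i) (ι ℂ a * c) =
          ι ℂ (b.repr a i • b i) * c + ι ℂ a * (ι ℂ (b i) * ctr (b.coord i) c) := by
        intro i
        rw [ctr_ι_mul, mul_sub, ← mul_assoc, ι_anti]
        simp [mul_assoc]
      rw [Finset.sum_congr rfl fun i _ => h1 i, Finset.sum_add_distrib, ← Finset.sum_mul,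
        ← Finset.mul_sum, ih hc, ← map_sum, b.sum_repr]
      push_cast
      rw [add_smul, one_smul, mul_smul_comm, add_comm]
    · intro x y hx hy
      simp only [map_add, mul_add, Finset.sum_add_distrib, hx, hy, smul_add]

theorem mul_nondeg [FiniteDimensional ℂ V] (n : ℕ) (hn : n < Module.finrank ℂ V)
    {x : ExteriorAlgebra ℂ V} (hx : x ∈ ⋀[ℂ]^n V) (h : ∀ v, ι ℂ v * x = 0) : x = 0 := by
  let b := Module.finBasis ℂ V
  have h1 := euler b n hx
  have h2 : ∀ i, ι ℂ (b i) * ctr (b.coord i) x = x := by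
    intro i
    have := ctr_ι_mul (b.coord i) (b i) x
    rw [h, map_zero] at this
    simp at this
    exact (sub_eq_zero.1 this.symm).symm
  rw [Finset.sum_congr rfl fun i _ => h2 i] at h1
  simp only [Finset.sum_const, Finset.card_univ, Fintype.card_fin, ← Nat.cast_smul_eq_nsmul ℂ] at h1
  rw [← sub_eq_zero, ← sub_smul, smul_eq_zero, sub_eq_zero] at h1
  rcases h1 with h1 | h1
  · have : Module.finrank ℂ V = n := by exact_mod_cast h1
    omega
  · exact h1

theorem pairing_nondeg [FiniteDimensional ℂ V] (hV : Module.finrank ℂ V = 6)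
    (vol : ExteriorAlgebra ℂ V →ₗ[ℂ] ℂ)
    (hvol : Function.Bijective fun x : ⋀[ℂ]^6 V => vol x)
    {x : ExteriorAlgebra ℂ V} (hx : x ∈ ⋀[ℂ]^3 V) (h : ∀ y ∈ ⋀[ℂ]^3 V, vol (y * x) = 0) :
    x = 0 := by
  have hone : (1 : ExteriorAlgebra ℂ V) ∈ ⋀[ℂ]^0 V := by
    change _ ∈ LinearMap.range (ι ℂ) ^ 0
    rw [pow_zero]
    exact Submodule.mem_one.2 ⟨1, by simp⟩
  refine mul_nondeg 3 (by omega) hx fun a => ?_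
  refine mul_nondeg 4 (by omega) (ι_mul_mem a hx) fun b => ?_
  refine mul_nondeg 5 (by omega) (ι_mul_mem b (ι_mul_mem a hx)) fun c => ?_
  have hm := ι_mul_mem c (ι_mul_mem b (ι_mul_mem a hx))
  have h0 : vol (ι ℂ c * (ι ℂ b * (ι ℂ a * x))) = 0 := by
    have := h _ (ι_mul_mem c (ι_mul_mem b (ι_mul_mem a hone)))
    simpa [mul_assoc] using this
  have := hvol.1 (a₁ := ⟨_, hm⟩) (a₂ := 0) (by simpa using h0)
  exact congrArg Subtype.val this

theorem top_ne_zero (b : Module.Basis (Fin 6) ℂ V) :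
    ι ℂ (b 0) * (ι ℂ (b 1) * (ι ℂ (b 2) * (ι ℂ (b 3) * (ι ℂ (b 4) * ι ℂ (b 5))))) ≠ 0 := by
  intro h
  have key : ∀ (i : Fin 6) (y : ExteriorAlgebra ℂ V), ctr (b.coord i) y = 0 →
      ι ℂ (b i) * y = 0 → y = 0 := by
    intro i y hy h
    have := ctr_ι_mul (b.coord i) (b i) y
    rw [h, hy] at this
    simpa using this.symm
  have h5 := fun d : Module.Dual ℂ V => ctr_ι_mul d (b 5) 1
  simp only [mul_one, ctr_one, mul_zero, sub_zero] at h5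
  have h1 := key 0 _ (by simp [ctr_ι_mul, h5]) h
  have h2 := key 1 _ (by simp [ctr_ι_mul, h5]) h1
  have h3 := key 2 _ (by simp [ctr_ι_mul, h5]) h2
  have h4 := key 3 _ (by simp [ctr_ι_mul, h5]) h3
  have h6 := key 4 _ (by simp [ctr_ι_mul, h5]) h4
  have h7 := h5 (b.coord 5)
  rw [h6] at h7
  simp at h7

theorem products {R : Type*} [Ring R] [Algebra ℂ R] (e : Fin 6 → R) (hsq : ∀ i, e i * e i = 0)
    (hanti : ∀ i j, e i * e j = -(e j * e i)) (x y z : ℂ) :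
    (e 0 * (e 1 * e 2 + e 3 * e 4)) * ((x • e 5 + y • e 1 + z • e 4) * (e 1 * e 2 + e 3 * e 4)) =
      (2 * x) • (e 0 * (e 1 * (e 2 * (e 3 * (e 4 * e 5))))) ∧
    (e 0 * (e 1 * e 2 + e 3 * e 4)) * ((x • e 5 + y • e 1 + z • e 4) * (e 1 * e 3 + e 2 * e 5)) =
      y • (e 0 * (e 1 * (e 2 * (e 3 * (e 4 * e 5))))) ∧
    (e 0 * (e 1 * e 3 + e 2 * e 5)) * ((x • e 5 + y • e 1 + z • e 4) * (e 1 * e 3 + e 2 * e 5)) =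
      (2 * z) • (e 0 * (e 1 * (e 2 * (e 3 * (e 4 * e 5))))) := by
  have hsq' : ∀ i r, e i * (e i * r) = 0 := fun i r => by rw [← mul_assoc, hsq, zero_mul]
  have h1 : ∀ i j, j < i → e i * e j = -(e j * e i) := fun i j _ => hanti i j
  have h2 : ∀ i j r, j < i → e i * (e j * r) = -(e j * (e i * r)) := fun i j r _ => by
    rw [← mul_assoc, hanti, neg_mul, mul_assoc]
  refine ⟨?_, ?_, ?_⟩
  all_goals
    simp [mul_add, add_mul, mul_assoc, hsq, hsq', h1, h2]
  all_goals module
end ext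

/-- Wedge with a vector, as a bilinear map `V × ⋀²V → ⋀³V`. -/
noncomputable def wedge12 (V : Type*) [AddCommGroup V] [Module ℂ V] :
    V →ₗ[ℂ] ⋀[ℂ]^2 V →ₗ[ℂ] ⋀[ℂ]^3 V :=
  LinearMap.mk₂ ℂ (fun v β => ⟨ι ℂ v * (β : ExteriorAlgebra ℂ V), ι_mul_mem v β.2⟩)
    (fun a b c => Subtype.ext (by simp [add_mul]))
    (fun r b c => Subtype.ext (by simp))
    (fun a b c => Subtype.ext (by simp [mul_add]))
    (fun r b c => Subtype.ext (by simp))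


/-- For every Lagrangian subspace `A` of `(⋀³V, σ)` there is a nonzero
`v ∈ V` with `dim(A ∩ F_v) ≥ 2`; i.e. the locus `W_A` is never empty. -/
theorem stmt17 (V : Type*) [AddCommGroup V] [Module ℂ V] [FiniteDimensional ℂ V]
    (hV : Module.finrank ℂ V = 6)
    (vol : ExteriorAlgebra ℂ V →ₗ[ℂ] ℂ)
    (hvol : Function.Bijective fun x : ⋀[ℂ]^6 V => vol x)
    (A : Submodule ℂ (ExteriorAlgebra ℂ V))
    (hA3 : A ≤ ⋀[ℂ]^3 V) (hA10 : Module.finrank ℂ A = 10)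
    (hAlag : ∀ x ∈ A, ∀ y ∈ A, vol (x * y) = 0) :
    ∃ v : V, v ≠ 0 ∧ 2 ≤ Module.finrank ℂ ↥(A ⊓ Fsub v) := by
  have f2 : Module.finrank ℂ (⋀[ℂ]^2 V) = 15 := by
    rw [exteriorPower.finrank_eq, hV]; rfl
  have f3 : Module.finrank ℂ (⋀[ℂ]^3 V) = 20 := by
    rw [exteriorPower.finrank_eq, hV]; rfl
  let b : Module.Basis (Fin 6) ℂ V := Module.finBasisOfFinrankEq ℂ V hV
  let eV : V ≃ₗ[ℂ] (Fin 6 → ℂ) := b.equivFun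
  let eX : (⋀[ℂ]^2 V) ≃ₗ[ℂ] (Fin 15 → ℂ) := LinearEquiv.ofFinrankEq _ _ (by simp [f2])
  let eW : (⋀[ℂ]^3 V) ≃ₗ[ℂ] (Fin 20 → ℂ) := LinearEquiv.ofFinrankEq _ _ (by simp [f3])
  let m : (Fin 6 → ℂ) →ₗ[ℂ] (Fin 15 → ℂ) →ₗ[ℂ] (Fin 20 → ℂ) :=
    ((wedge12 V).compl₁₂ eV.symm.toLinearMap eX.symm.toLinearMap).compr₂ eW.toLinearMap
  let s : (Fin 20 → ℂ) →ₗ[ℂ] ExteriorAlgebra ℂ V :=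
    (⋀[ℂ]^3 V).subtype ∘ₗ eW.symm.toLinearMap
  let σ : (Fin 20 → ℂ) →ₗ[ℂ] (Fin 20 → ℂ) →ₗ[ℂ] ℂ :=
    ((LinearMap.mul ℂ (ExteriorAlgebra ℂ V)).compl₁₂ s s).compr₂ vol
  have hs : ∀ x, s x ∈ ⋀[ℂ]^3 V := fun x => (eW.symm x).2
  have hsinj : Function.Injective s :=
    Subtype.val_injective.comp eW.symm.injective
  have hσ : ∀ x y, σ x y = vol (s x * s y) := fun x y => rfl
  have hm : ∀ v β, s (m v β) = ι ℂ (eV.symm v) * (eX.symm β : ExteriorAlgebra ℂ V) := by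
    intro v β
    change ((eW.symm (eW (wedge12 V (eV.symm v) (eX.symm β))) : ⋀[ℂ]^3 V) : ExteriorAlgebra ℂ V) = _
    rw [LinearEquiv.symm_apply_apply]
    rfl
  have hskew : ∀ x y, s x * s y = -(s y * s x) := by
    intro x y
    rw [anti_three (hs y) 3 (hs x)]
    norm_num
  have hrange : ∀ v, (LinearMap.range (m v)).map s = Fsub (eV.symm v) := by
    intro v
    ext x
    constructor
    · rintro ⟨_, ⟨β, rfl⟩, rfl⟩
      exact ⟨_, (eX.symm β).2, (hm v β).symm⟩
    · rintro ⟨β, hβ, rfl⟩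
      refine ⟨_, ⟨eX ⟨β, hβ⟩, rfl⟩, ?_⟩
      rw [hm, LinearEquiv.symm_apply_apply]
      rfl
  have hmap : ∀ S : Submodule ℂ (Fin 20 → ℂ), Module.finrank ℂ (S.map s) = Module.finrank ℂ S :=
    fun S => (Submodule.equivMapOfInjective s hsinj S).finrank_eq.symm
  have hAs : (A.comap s).map s = A := by
    rw [Submodule.map_comap_eq, inf_eq_right]
    intro x hx
    exact ⟨eW ⟨x, hA3 hx⟩, by simp [s]⟩
  let top := ι ℂ (b 0) * (ι ℂ (b 1) * (ι ℂ (b 2) * (ι ℂ (b 3) * (ι ℂ (b 4) * ι ℂ (b 5)))))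
  have hone : (1 : ExteriorAlgebra ℂ V) ∈ ⋀[ℂ]^0 V := by
    change _ ∈ LinearMap.range (ι ℂ) ^ 0
    rw [pow_zero]
    exact Submodule.mem_one.2 ⟨1, by simp⟩
  have hι : ∀ v : V, ι ℂ v ∈ ⋀[ℂ]^1 V := fun v => by
    simpa using ι_mul_mem v hone
  have htop : vol top ≠ 0 := by
    intro h0
    have hmem : top ∈ ⋀[ℂ]^6 V :=
      ι_mul_mem _ (ι_mul_mem _ (ι_mul_mem _ (ι_mul_mem _ (ι_mul_mem _ (hι _)))))
    have := hvol.1 (a₁ := ⟨_, hmem⟩) (a₂ := 0) (by simpa using h0)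
    exact top_ne_zero b (congrArg Subtype.val this)
  have h2 : ∀ i j : Fin 6, ι ℂ (b i) * ι ℂ (b j) ∈ ⋀[ℂ]^2 V := fun i j => ι_mul_mem _ (hι _)
  let β₁ : ⋀[ℂ]^2 V := ⟨ι ℂ (b 1) * ι ℂ (b 2) + ι ℂ (b 3) * ι ℂ (b 4),
    Submodule.add_mem _ (h2 _ _) (h2 _ _)⟩
  let β₂ : ⋀[ℂ]^2 V := ⟨ι ℂ (b 1) * ι ℂ (b 3) + ι ℂ (b 2) * ι ℂ (b 5),
    Submodule.add_mem _ (h2 _ _) (h2 _ _)⟩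
  obtain ⟨v, hv, hfin⟩ := general_case m σ (by simp)
    (by
      intro x
      have h := hskew x x
      rw [hσ]
      have h' : s x * s x = 0 := by
        have h'' : (2 : ℂ) • (s x * s x) = 0 := by
          rw [two_smul]; nth_rewrite 1 [h]; simp
        exact (smul_eq_zero.1 h'').resolve_left two_ne_zero
      rw [h', map_zero])
    (by
      intro x hx
      apply hsinj
      rw [map_zero]
      refine pairing_nondeg hV vol hvol (hs x) fun y hy => ?_
      have h := hx (eW ⟨y, hy⟩)
      rw [hσ, hskew, map_neg, neg_eq_zero] at h
      simpa [s] using h)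
    (by
      intro v hv
      rw [← hmap, hrange]
      exact finrank_F hV _ (by simpa using hv))
    (by
      intro v β γ
      rw [hσ, hm, hm, isotropic_F _ (eX.symm β).2, map_zero])
    (eV (b 0)) (by simpa using b.ne_zero 0) (eX β₁) (eX β₂)
    (by
      intro c₁ c₂ c₃
      obtain ⟨p1, p2, p3⟩ := products (fun i => ι ℂ (b i)) (fun i => ι_sq_zero _)
        (fun i j => ι_anti _ _) (c₁ / (2 * vol top)) (c₂ / vol top) (c₃ / (2 * vol top))
      refine ⟨eV ((c₁ / (2 * vol top)) • b 5 + (c₂ / vol top) • b 1 +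
        (c₃ / (2 * vol top)) • b 4), ?_, ?_, ?_⟩
      · rw [hσ, hm, hm]
        simp only [LinearEquiv.symm_apply_apply, map_add, map_smul]
        refine (congrArg vol p1).trans ?_
        rw [map_smul, smul_eq_mul]
        change _ * vol top = _
        field_simp
      · rw [hσ, hm, hm]
        simp only [LinearEquiv.symm_apply_apply, map_add, map_smul]
        refine (congrArg vol p2).trans ?_
        rw [map_smul, smul_eq_mul]
        change _ * vol top = _
        field_simp
      · rw [hσ, hm, hm]
        simp only [LinearEquiv.symm_apply_apply, map_add, map_smul]
        refine (congrArg vol p3).trans ?_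
        rw [map_smul, smul_eq_mul]
        change _ * vol top = _
        field_simp)
    (A.comap s) (by rw [← hmap, hAs, hA10])
    (fun x hx y hy => hAlag _ hx _ hy)
  refine ⟨eV.symm v, by simpa using hv, ?_⟩
  rw [← hmap, Submodule.map_inf s hsinj, hAs, hrange] at hfin
  exact hfin
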